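/- arXiv:1405.1575 — 2 statements merged into one kernel-verified Lean document; each statement's English description precedes it below -/
import Mathlib

section
/- The space J3(F2) is a primitive linear subspace of the 3×3 matrices over F2 with upper rank 2. -/
/-!
A matrix of `J3` is upper triangular with diagonal entries summing to zero; over `F2` this forces
the product of these entries to vanish, so the matrix is singular.

Conversely, since `3 = 1` in `F2`, the space `J3` contains `1 - u vᵀ` whenever `u vᵀ` is upper
triangular and `v ⬝ u = 1`. Such a matrix differs from the identity by a rank-one matrix, so it has
rank at least `2`; it kills `u` on the right and `v` on the left. Taking `v = e_k` with `k` the last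
index where `u` is nonzero, or `u = e_k` with `k` the first index where `v` is nonzero, every
nonzero vector is in the right kernel, and in the left kernel, of a matrix of `J3` of rank `2`.

This yields primitivity: for invertible `P` and `Q`, choose such an `M` killing the last column of
`Q`. The last column of `P * M * Q` is zero, so deleting it does not decrease the rank. Rows are
treated in the same way with the last row of `P`.
-/

open Matrix

/-- Two linear subspaces of `n × p` matrices over `K` are *equivalent* when one is obtained
from the other by multiplying on the left and on the right by fixed invertible matrices. -/
def MatEquiv (K : Type*) [Field K] {n p : ℕ}
    (V₁ V₂ : Submodule K (Matrix (Fin n) (Fin p) K)) : Prop :=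
  ∃ (P : Matrix (Fin n) (Fin n) K) (Q : Matrix (Fin p) (Fin p) K),
    IsUnit P ∧ IsUnit Q ∧
      (V₂ : Set (Matrix (Fin n) (Fin p) K)) =
        (fun M => P * M * Q) '' (V₁ : Set (Matrix (Fin n) (Fin p) K))

/-- A linear subspace of matrices is *reduced* when no nonzero vector is annihilated by every
matrix of the space, and the column spaces of the matrices of the space together span the
whole target space. -/
def Reduced (K : Type*) [Field K] {n p : ℕ}
    (V : Submodule K (Matrix (Fin n) (Fin p) K)) : Prop :=
  (∀ x : Fin p → K, (∀ M ∈ V, M.mulVec x = 0) → x = 0) ∧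
  Submodule.span K {y : Fin n → K | ∃ M ∈ V, ∃ x : Fin p → K, M.mulVec x = y} = ⊤

/-- The *upper rank* of a linear subspace of matrices: the maximal rank of a matrix in it. -/
noncomputable def urk {K : Type*} [Field K] {n p : ℕ}
    (V : Submodule K (Matrix (Fin n) (Fin p) K)) : ℕ :=
  sSup (Matrix.rank '' (V : Set (Matrix (Fin n) (Fin p) K)))

/-- The matrix obtained by deleting the last column. -/
def dropCol {K : Type*} [Field K] {n p : ℕ} (M : Matrix (Fin n) (Fin p) K) :
    Matrix (Fin n) (Fin (p - 1)) K :=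
  M.submatrix id (Fin.castLE (Nat.sub_le p 1))

/-- The matrix obtained by deleting the last row. -/
def dropRow {K : Type*} [Field K] {n p : ℕ} (M : Matrix (Fin n) (Fin p) K) :
    Matrix (Fin (n - 1)) (Fin p) K :=
  M.submatrix (Fin.castLE (Nat.sub_le n 1)) id

/-- A linear subspace of matrices (of upper rank `r = urk V`) is *semi-primitive* when it is
reduced and it is not equivalent to a subspace `T` such that the space obtained by deleting
the last column of each matrix of `T` has upper rank at most `r - 1`. -/
def SemiPrimitive (K : Type*) [Field K] {n p : ℕ}
    (V : Submodule K (Matrix (Fin n) (Fin p) K)) : Prop :=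
  Reduced K V ∧
    ¬ ∃ T : Submodule K (Matrix (Fin n) (Fin p) K),
        MatEquiv K V T ∧ ∀ M ∈ T, (dropCol M).rank ≤ urk V - 1

/-- A linear subspace of matrices (of upper rank `r = urk V`) is *primitive* when it is
semi-primitive and it is not equivalent to a subspace `T` such that the space obtained by
deleting the last row of each matrix of `T` has upper rank at most `r - 1`. -/
def Primitive (K : Type*) [Field K] {n p : ℕ}
    (V : Submodule K (Matrix (Fin n) (Fin p) K)) : Prop :=
  SemiPrimitive K V ∧
    ¬ ∃ T : Submodule K (Matrix (Fin n) (Fin p) K),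
        MatEquiv K V T ∧ ∀ M ∈ T, (dropRow M).rank ≤ urk V - 1

/-- `J3(F2)`: the space of upper-triangular `3 × 3` matrices over `F2` with trace zero. -/
def J3 : Submodule (ZMod 2) (Matrix (Fin 3) (Fin 3) (ZMod 2)) where
  carrier := {M | M.trace = 0 ∧ ∀ i j : Fin 3, j < i → M i j = 0}
  add_mem' := by
    rintro M N ⟨hM1, hM2⟩ ⟨hN1, hN2⟩
    refine ⟨by simp [Matrix.trace_add, hM1, hN1], ?_⟩
    intro i j h
    simp [Matrix.add_apply, hM2 i j h, hN2 i j h]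
  zero_mem' := by
    refine ⟨by simp, ?_⟩
    intro i j h
    simp
  smul_mem' := by
    rintro c M ⟨hM1, hM2⟩
    refine ⟨by simp [Matrix.trace_smul, hM1], ?_⟩
    intro i j h
    simp [Matrix.smul_apply, hM2 i j h]

section Rank

variable {K : Type*} [Field K]

lemma matrix_rank_add_le {m n : Type*} [Finite m] [Fintype n] (A B : Matrix m n K) :
    (A + B).rank ≤ A.rank + B.rank := by
  have hrange : LinearMap.range (A + B).mulVecLin ≤
      LinearMap.range A.mulVecLin ⊔ LinearMap.range B.mulVecLin := by
    rw [mulVecLin_add]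
    exact LinearMap.range_add_le _ _
  exact (Submodule.finrank_mono hrange).trans (Submodule.finrank_add_le_finrank_add_finrank _ _)

lemma card_le_rank_one_sub_vecMulVec_add_one {n : Type*} [Fintype n] [DecidableEq n]
    (u v : n → K) : Fintype.card n ≤ (1 - vecMulVec u v).rank + 1 :=
  calc Fintype.card n = (1 - vecMulVec u v + vecMulVec u v).rank := by
        rw [sub_add_cancel, rank_one]
    _ ≤ (1 - vecMulVec u v).rank + (vecMulVec u v).rank := matrix_rank_add_le _ _
    _ ≤ (1 - vecMulVec u v).rank + 1 := by gcongr; exact rank_vecMulVec_le u v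

lemma rank_lt_card_of_det_eq_zero {n : Type*} [Fintype n] [DecidableEq n] {M : Matrix n n K}
    (hM : M.det = 0) : M.rank < Fintype.card n := by
  refine M.rank_le_card_width.lt_of_ne fun hrank => ?_
  have hcol : LinearIndependent K M.col :=
    linearIndependent_iff_card_eq_finrank_span.mpr
      (hrank.symm.trans M.rank_eq_finrank_span_cols)
  have hdet : IsUnit M.det :=
    M.isUnit_iff_isUnit_det.mp (linearIndependent_cols_iff_isUnit.mp hcol)
  exact hdet.ne_zero hM

lemma rank_mul_mul_of_isUnit {R m n : Type*} [CommRing R] [Fintype m] [DecidableEq m] [Fintype n]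
    [DecidableEq n] {P : Matrix m m R} {Q : Matrix n n R} (hP : IsUnit P) (hQ : IsUnit Q)
    (M : Matrix m n R) : (P * M * Q).rank = M.rank := by
  rw [rank_mul_eq_left_of_isUnit_det _ _ (Q.isUnit_iff_isUnit_det.mp hQ),
    rank_mul_eq_right_of_isUnit_det _ _ (P.isUnit_iff_isUnit_det.mp hP)]

lemma rank_le_rank_dropCol {n p : ℕ} {N : Matrix (Fin n) (Fin (p + 1)) K}
    (hN : N.col (Fin.last p) = 0) : N.rank ≤ (dropCol N).rank := by
  have hcols : Set.range N.col ⊆ insert 0 (Set.range (dropCol N).col) := by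
    rintro _ ⟨j, rfl⟩
    induction j using Fin.lastCases with
    | last => exact Or.inl hN
    | cast j => exact Or.inr ⟨j, rfl⟩
  rw [rank_eq_finrank_span_cols, rank_eq_finrank_span_cols]
  exact Submodule.finrank_mono ((Submodule.span_mono hcols).trans_eq Submodule.span_insert_zero)

lemma rank_le_rank_dropRow {n p : ℕ} {N : Matrix (Fin (n + 1)) (Fin p) K}
    (hN : N.row (Fin.last n) = 0) : N.rank ≤ (dropRow N).rank :=
  calc N.rank = Nᵀ.rank := N.rank_transpose.symm
    _ ≤ (dropCol Nᵀ).rank := rank_le_rank_dropCol hN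
    _ = (dropRow N).rank := (dropRow N).rank_transpose

end Rank

section Primitivity

variable {K : Type*} [Field K] {n p r : ℕ}

lemma MatEquiv.exists_le_rank_dropCol {V T : Submodule K (Matrix (Fin n) (Fin (p + 1)) K)}
    (hVT : MatEquiv K V T) (hV : ∀ w ≠ 0, ∃ M ∈ V, M *ᵥ w = 0 ∧ r ≤ M.rank) :
    ∃ N ∈ T, r ≤ (dropCol N).rank := by
  obtain ⟨P, Q, hP, hQ, hT⟩ := hVT
  have hw : Q *ᵥ Pi.single (Fin.last p) 1 ≠ 0 := by
    rw [← Q.mulVec_zero, (mulVec_injective_of_isUnit hQ).ne_iff]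
    exact Pi.single_ne_zero_iff.mpr one_ne_zero
  obtain ⟨M, hM, hMw, hr⟩ := hV _ hw
  have hcol : (P * M * Q).col (Fin.last p) = 0 := by
    rw [← mulVec_single_one, ← mulVec_mulVec, ← mulVec_mulVec, hMw, mulVec_zero]
  have hmem : P * M * Q ∈ T := hT.ge ⟨M, hM, rfl⟩
  refine ⟨_, hmem, ?_⟩
  calc r ≤ M.rank := hr
    _ = (P * M * Q).rank := (rank_mul_mul_of_isUnit hP hQ M).symm
    _ ≤ (dropCol (P * M * Q)).rank := rank_le_rank_dropCol hcol

lemma MatEquiv.exists_le_rank_dropRow {V T : Submodule K (Matrix (Fin (n + 1)) (Fin p) K)}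
    (hVT : MatEquiv K V T) (hV : ∀ w ≠ 0, ∃ M ∈ V, w ᵥ* M = 0 ∧ r ≤ M.rank) :
    ∃ N ∈ T, r ≤ (dropRow N).rank := by
  obtain ⟨P, Q, hP, hQ, hT⟩ := hVT
  have hw : Pi.single (Fin.last n) 1 ᵥ* P ≠ 0 := by
    rw [← P.zero_vecMul, (vecMul_injective_of_isUnit hP).ne_iff]
    exact Pi.single_ne_zero_iff.mpr one_ne_zero
  obtain ⟨M, hM, hwM, hr⟩ := hV _ hw
  have hrow : (P * M * Q).row (Fin.last n) = 0 := by
    rw [← single_one_vecMul, ← vecMul_vecMul, ← vecMul_vecMul, hwM, zero_vecMul]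
  have hmem : P * M * Q ∈ T := hT.ge ⟨M, hM, rfl⟩
  refine ⟨_, hmem, ?_⟩
  calc r ≤ M.rank := hr
    _ = (P * M * Q).rank := (rank_mul_mul_of_isUnit hP hQ M).symm
    _ ≤ (dropRow (P * M * Q)).rank := rank_le_rank_dropRow hrow

lemma Reduced.semiPrimitive {V : Submodule K (Matrix (Fin n) (Fin (p + 1)) K)}
    (hred : Reduced K V) (hpos : 0 < urk V)
    (hker : ∀ w ≠ 0, ∃ M ∈ V, M *ᵥ w = 0 ∧ urk V ≤ M.rank) : SemiPrimitive K V := by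
  refine ⟨hred, ?_⟩
  rintro ⟨T, hVT, hT⟩
  obtain ⟨N, hN, hrank⟩ := hVT.exists_le_rank_dropCol hker
  exact (Nat.sub_one_lt_of_lt hpos).not_ge (hrank.trans (hT N hN))

lemma SemiPrimitive.primitive {V : Submodule K (Matrix (Fin (n + 1)) (Fin p) K)}
    (hsemi : SemiPrimitive K V) (hpos : 0 < urk V)
    (hker : ∀ w ≠ 0, ∃ M ∈ V, w ᵥ* M = 0 ∧ urk V ≤ M.rank) : Primitive K V := by
  refine ⟨hsemi, ?_⟩
  rintro ⟨T, hVT, hT⟩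
  obtain ⟨N, hN, hrank⟩ := hVT.exists_le_rank_dropRow hker
  exact (Nat.sub_one_lt_of_lt hpos).not_ge (hrank.trans (hT N hN))

end Primitivity

section UpperTriangular

variable {n α : Type*} [LT n] [DecidableEq n] [MulZeroClass α]

lemma isUpperTriangular_vecMulVec_single_right {u : n → α} {k : n} (hu : ∀ i, k < i → u i = 0)
    (a : α) : (vecMulVec u (Pi.single k a)).IsUpperTriangular := by
  intro i j hji
  rw [vecMulVec_apply]
  obtain rfl | hj := eq_or_ne j k
  · rw [hu i hji, zero_mul]
  · rw [Pi.single_eq_of_ne hj, mul_zero]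

lemma isUpperTriangular_vecMulVec_single_left {v : n → α} {k : n} (hv : ∀ j, j < k → v j = 0)
    (a : α) : (vecMulVec (Pi.single k a) v).IsUpperTriangular := by
  intro i j hji
  rw [vecMulVec_apply]
  obtain rfl | hi := eq_or_ne i k
  · rw [hv j hji, mul_zero]
  · rw [Pi.single_eq_of_ne hi, zero_mul]

end UpperTriangular

lemma rank_le_two_of_mem_J3 {M : Matrix (Fin 3) (Fin 3) (ZMod 2)} (hM : M ∈ J3) :
    M.rank ≤ 2 := by
  obtain ⟨htrace, hupper⟩ := hM
  have hprod : ∀ a b c : ZMod 2, a + b + c = 0 → a * b * c = 0 := by decide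
  have hdet : M.det = 0 := by
    rw [det_of_isUpperTriangular hupper, Fin.prod_univ_three]
    exact hprod _ _ _ (M.trace_fin_three ▸ htrace)
  exact Nat.le_of_lt_succ (rank_lt_card_of_det_eq_zero hdet)

lemma one_sub_vecMulVec_mem_J3 {u v : Fin 3 → ZMod 2} (hupper : (vecMulVec u v).IsUpperTriangular)
    (hvu : v ⬝ᵥ u = 1) : 1 - vecMulVec u v ∈ J3 := by
  refine ⟨?_, blockTriangular_one.sub hupper⟩
  rw [trace_sub, trace_one, trace_vecMulVec, dotProduct_comm, hvu]
  decide

lemma two_le_rank_one_sub_vecMulVec (u v : Fin 3 → ZMod 2) : 2 ≤ (1 - vecMulVec u v).rank :=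
  Nat.le_of_succ_le_succ (card_le_rank_one_sub_vecMulVec_add_one u v)

lemma exists_mem_J3_mulVec_eq_zero {w : Fin 3 → ZMod 2} (hw : w ≠ 0) :
    ∃ M ∈ J3, M *ᵥ w = 0 ∧ 2 ≤ M.rank := by
  obtain ⟨k, hk⟩ := {i | w i ≠ 0}.toFinite.exists_maximal (Function.ne_iff.mp hw)
  have hupper : (vecMulVec w (Pi.single k 1)).IsUpperTriangular :=
    isUpperTriangular_vecMulVec_single_right (fun _ hi => not_not.mp (hk.not_prop_of_gt hi)) 1
  have hdot : Pi.single k 1 ⬝ᵥ w = 1 :=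
    (single_one_dotProduct k w).trans (Fin.eq_one_of_ne_zero _ hk.prop)
  refine ⟨_, one_sub_vecMulVec_mem_J3 hupper hdot, ?_, two_le_rank_one_sub_vecMulVec _ _⟩
  rw [sub_mulVec, one_mulVec, vecMulVec_mulVec, hdot, MulOpposite.op_one, one_smul, sub_self]

lemma exists_mem_J3_vecMul_eq_zero {w : Fin 3 → ZMod 2} (hw : w ≠ 0) :
    ∃ M ∈ J3, w ᵥ* M = 0 ∧ 2 ≤ M.rank := by
  obtain ⟨k, hk⟩ := {i | w i ≠ 0}.toFinite.exists_minimal (Function.ne_iff.mp hw)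
  have hupper : (vecMulVec (Pi.single k 1) w).IsUpperTriangular :=
    isUpperTriangular_vecMulVec_single_left (fun _ hi => not_not.mp (hk.not_prop_of_lt hi)) 1
  have hdot : w ⬝ᵥ Pi.single k 1 = 1 :=
    (dotProduct_single_one w k).trans (Fin.eq_one_of_ne_zero _ hk.prop)
  refine ⟨_, one_sub_vecMulVec_mem_J3 hupper hdot, ?_, two_le_rank_one_sub_vecMulVec _ _⟩
  rw [vecMul_sub, vecMul_one, vecMul_vecMulVec, hdot, one_smul, sub_self]

lemma urk_J3 : urk J3 = 2 := by
  obtain ⟨M, hM, -, hrank⟩ := exists_mem_J3_mulVec_eq_zero (one_ne_zero (α := Fin 3 → ZMod 2))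
  refine IsGreatest.csSup_eq ⟨⟨M, hM, (rank_le_two_of_mem_J3 hM).antisymm hrank⟩, ?_⟩
  rintro _ ⟨N, hN, rfl⟩
  exact rank_le_two_of_mem_J3 hN

lemma exists_mem_J3_mulVec_eq_sub_single (k : Fin 3) :
    ∃ M ∈ J3, ∀ x, M *ᵥ x = x - Pi.single k (x k) := by
  have hupper : (vecMulVec (Pi.single k 1) (Pi.single k (1 : ZMod 2))).IsUpperTriangular :=
    isUpperTriangular_vecMulVec_single_right (fun _ hi => Pi.single_eq_of_ne hi.ne' 1) 1
  have hdot : Pi.single k 1 ⬝ᵥ Pi.single k (1 : ZMod 2) = 1 :=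
    (single_one_dotProduct k _).trans (Pi.single_eq_same k 1)
  refine ⟨_, one_sub_vecMulVec_mem_J3 hupper hdot, fun x => ?_⟩
  rw [sub_mulVec, one_mulVec, vecMulVec_mulVec, single_one_dotProduct, op_smul_eq_smul,
    ← Pi.single_smul, smul_eq_mul, mul_one]

lemma reduced_J3 : Reduced (ZMod 2) J3 := by
  refine ⟨fun x hx => funext fun i => ?_, ?_⟩
  · obtain ⟨k, hk⟩ := exists_ne i
    obtain ⟨M, hM, hMx⟩ := exists_mem_J3_mulVec_eq_sub_single k
    calc x i = (M *ᵥ x) i := by rw [hMx, Pi.sub_apply, Pi.single_eq_of_ne hk.symm, sub_zero]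
      _ = 0 := congrFun (hx M hM) i
  · rw [eq_top_iff, ← (Pi.basisFun (ZMod 2) (Fin 3)).span_eq]
    refine Submodule.span_mono ?_
    rintro _ ⟨i, rfl⟩
    obtain ⟨k, hk⟩ := exists_ne i
    obtain ⟨M, hM, hMx⟩ := exists_mem_J3_mulVec_eq_sub_single k
    refine ⟨M, hM, Pi.single i 1, ?_⟩
    rw [hMx, Pi.single_eq_of_ne hk, Pi.single_zero, sub_zero, Pi.basisFun_apply]

theorem J3_is_primitive_with_upper_rank_two :
    Primitive (ZMod 2) J3 ∧ urk J3 = 2 := by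
  have hpos : 0 < urk J3 := urk_J3.symm ▸ Nat.zero_lt_two
  have hsemi : SemiPrimitive (ZMod 2) J3 :=
    reduced_J3.semiPrimitive hpos fun _ hw => by
      simpa only [urk_J3] using exists_mem_J3_mulVec_eq_zero hw
  have hprim : Primitive (ZMod 2) J3 :=
    hsemi.primitive hpos fun _ hw => by
      simpa only [urk_J3] using exists_mem_J3_vecMul_eq_zero hw
  exact ⟨hprim, urk_J3⟩
end

section
/- Let V be a primitive linear subspace of the 3×3 matrices over F2 with upper rank 2. If V contains a matrix of rank 1, then V is equivalent to a linear subspace of J3(F2). -/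
/-!
A primitive space whose upper rank is one less than the size of its matrices consists of singular
matrices, and every hyperplane is mapped injectively by some matrix of the space; the same holds for
the space of transposes.

Normalize the rank one matrix to `E₀₀`. Comparing the determinants of `M` and `M + E₀₀` shows that
the lower right `2 × 2` block of every `M ∈ V` is singular, and a linear space of singular `2 × 2`
matrices has a common left or right null vector. Up to transposition there are thus nonzero `w` and
`v` such that `w M` is a multiple of `v` for all `M ∈ V`.

Choose `M₁ ∈ V` injective on the hyperplane `v^⊥`; being singular, it satisfies `w M₁ = 0`. Choose
`M₂ ∈ V` with `w M₂ = v`. The null vectors `y` of `M₂` and `x` of `M₂ - M₁` lie in `v^⊥`, and in the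
bases extending `x, y` and `M₁ x, M₁ y` all matrices of `V` have last row `(0, 0, *)`, while the
first two columns of `M₁` and `M₂` are those of `diag(1, 1, 0)` and `diag(1, 0, 1)`.

Over `F₂`, let `M` have corner entry `M₂₂ = 1`. Its upper left block is singular, and stays so when
the identity is subtracted, so the block has trace `1` and the product of its off-diagonal entries
vanishes. Adding `M₂` reduces the case `M₂₂ = 0` to this one. A group is not the union of two proper
subgroups, so one of the two off-diagonal entries vanishes on the whole space, which a permutation
of the basis turns into a subspace of `J3`. Transposing is harmless because reversing the order of
the basis carries `J3` transposed back to `J3`.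
-/

open Matrix

section LinearAlgebra

lemma forall_eq_zero_or_forall_eq_zero {R M N N' : Type*} [Ring R] [AddCommGroup M] [AddCommGroup N]
    [AddCommGroup N'] [Module R M] [Module R N] [Module R N'] {S : Submodule R M}
    (f : M →ₗ[R] N) (g : M →ₗ[R] N') (h : ∀ x ∈ S, f x = 0 ∨ g x = 0) :
    (∀ x ∈ S, f x = 0) ∨ ∀ x ∈ S, g x = 0 :=
  (AddSubgroupClass.subset_union (H := S) (K := f.ker) (L := g.ker)).mp h

lemma trace_submatrix_self {ι R : Type*} [Fintype ι] [AddCommMonoid R] (M : Matrix ι ι R)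
    (σ : Equiv.Perm ι) : (M.submatrix σ σ).trace = M.trace :=
  Equiv.sum_comp σ M.diag

variable {K : Type*} [Field K] {m n : Type*} [Fintype n]

lemma rank_lt_card_of_mulVec_eq_zero {M : Matrix m n K} {z : n → K} (hz : z ≠ 0)
    (hMz : M *ᵥ z = 0) : M.rank < Fintype.card n := by
  have hker : 0 < Module.finrank K M.mulVecLin.ker :=
    Module.finrank_pos_iff_exists_ne_zero.mpr ⟨⟨z, hMz⟩, Subtype.coe_ne_coe.mp hz⟩
  have hrank_nullity := M.mulVecLin.finrank_range_add_finrank_ker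
  rw [Module.finrank_fintype_fun_eq_card] at hrank_nullity
  rw [Matrix.rank]
  omega

lemma det_eq_zero_iff_rank_lt_card [DecidableEq n] {M : Matrix n n K} :
    M.det = 0 ↔ M.rank < Fintype.card n := by
  refine ⟨fun h => ?_, fun h => by_contra fun hM => h.ne <| rank_of_isUnit M ?_⟩
  · obtain ⟨z, hz, hMz⟩ := exists_mulVec_eq_zero_iff.mpr h
    exact rank_lt_card_of_mulVec_eq_zero hz hMz
  · exact (isUnit_iff_isUnit_det M).mpr (Ne.isUnit hM)

lemma exists_eq_vecMulVec_of_rank_le_one {M : Matrix m n K} (hM : M.rank ≤ 1) :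
    ∃ (u : m → K) (v : n → K), M = vecMulVec u v := by
  classical
  obtain ⟨u, hu⟩ := finrank_le_one_iff.mp hM
  choose v hv using fun j => hu ⟨M.col j, Pi.single j 1, by simp⟩
  refine ⟨u, v, ext_col fun j => ?_⟩
  simpa [col_vecMulVec] using (congrArg Subtype.val (hv j)).symm

lemma exists_isUnit_mulVec_eq [DecidableEq n] {u u' : n → K} (hu : u ≠ 0) (hu' : u' ≠ 0) :
    ∃ P : Matrix n n K, IsUnit P ∧ P *ᵥ u = u' := by
  obtain ⟨g, hg⟩ := Submodule.exists_linearEquiv_restrict_eq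
    ((LinearEquiv.toSpanNonzeroSingleton K _ u hu).symm ≪≫ₗ
      LinearEquiv.toSpanNonzeroSingleton K _ u' hu')
  refine ⟨LinearMap.toMatrix' g, LinearMap.isUnit_toMatrix'_iff.mpr ?_, ?_⟩
  · exact (Module.End.isUnit_iff _).mpr g.bijective
  · have hgu := hg ⟨u, Submodule.mem_span_singleton_self u⟩
    simpa [LinearMap.toMatrix'_mulVec, LinearEquiv.coord_self] using hgu.symm

lemma exists_isUnit_vecMul_eq [DecidableEq n] {v v' : n → K} (hv : v ≠ 0) (hv' : v' ≠ 0) :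
    ∃ Q : Matrix n n K, IsUnit Q ∧ v ᵥ* Q = v' := by
  obtain ⟨P, hP, hPv⟩ := exists_isUnit_mulVec_eq hv hv'
  exact ⟨Pᵀ, (isUnit_transpose _).mpr hP, by rw [vecMul_transpose, hPv]⟩

lemma exists_isUnit_mulVec_single_castSucc_eq {k : ℕ} {φ : Fin (k + 1) → K} (hφ : φ ≠ 0)
    {b : Fin k → Fin (k + 1) → K} (hb : LinearIndependent K b) (hφb : ∀ i, φ ⬝ᵥ b i = 0) :
    ∃ Q : Matrix (Fin (k + 1)) (Fin (k + 1)) K, IsUnit Q ∧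
      (∀ i, Q *ᵥ Pi.single i.castSucc 1 = b i) ∧ φ ᵥ* Q = Pi.single (Fin.last k) 1 := by
  obtain ⟨j, hj⟩ := Function.ne_iff.mp hφ
  let t : Fin (k + 1) → K := Pi.single j (φ j)⁻¹
  have ht : φ ⬝ᵥ t = 1 := by simpa [t] using mul_inv_cancel₀ hj
  have ht_notMem : t ∉ Submodule.span K (Set.range b) := fun hmem => by
    have hle : Submodule.span K (Set.range b) ≤ (dotProductBilin K K φ).ker :=
      Submodule.span_le.mpr (Set.range_subset_iff.mpr hφb)
    exact one_ne_zero (ht.symm.trans (hle hmem))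
  refine ⟨.of fun i j => (Fin.snoc b t : Fin (k + 1) → Fin (k + 1) → K) j i, ?_, ?_, ?_⟩
  · exact linearIndependent_cols_iff_isUnit.mp (linearIndependent_finSnoc.mpr ⟨hb, ht_notMem⟩)
  · intro i
    ext j
    simp
  · ext i
    refine i.lastCases ?_ fun i => ?_
    · simpa [vecMul] using ht
    · simpa [vecMul] using hφb i

lemma exists_isUnit_mulVec_eq_single_castSucc {k : ℕ} {φ : Fin (k + 1) → K} (hφ : φ ≠ 0)
    {b : Fin k → Fin (k + 1) → K} (hb : LinearIndependent K b) (hφb : ∀ i, φ ⬝ᵥ b i = 0) :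
    ∃ P : Matrix (Fin (k + 1)) (Fin (k + 1)) K, IsUnit P ∧
      (∀ i, P *ᵥ b i = Pi.single i.castSucc 1) ∧ Pi.single (Fin.last k) 1 ᵥ* P = φ := by
  obtain ⟨Q, hQ, hQb, hφQ⟩ := exists_isUnit_mulVec_single_castSucc_eq hφ hb hφb
  have hQdet := (isUnit_iff_isUnit_det Q).mp hQ
  refine ⟨Q⁻¹, isUnit_nonsing_inv_iff.mpr hQ, fun i => ?_, ?_⟩
  · rw [← hQb, mulVec_mulVec, nonsing_inv_mul Q hQdet, one_mulVec]
  · rw [← hφQ, vecMul_vecMul, mul_nonsing_inv Q hQdet, vecMul_one]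

lemma det_add_single_zero_zero {R : Type*} [CommRing R] {k : ℕ}
    (A : Matrix (Fin (k + 1)) (Fin (k + 1)) R) :
    (A + single 0 0 1).det = A.det + (A.submatrix Fin.succ Fin.succ).det := by
  have hsub (j : Fin (k + 1)) : (A + single 0 0 1).submatrix Fin.succ j.succAbove =
      A.submatrix Fin.succ j.succAbove := by
    ext i l
    simp [(Fin.succ_ne_zero i).symm]
  rw [det_succ_row_zero, det_succ_row_zero A, Fin.sum_univ_succ, Fin.sum_univ_succ]
  simp only [hsub]
  simp [(Fin.succ_ne_zero _).symm]
  ring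

lemma det_vecMulVec_add_vecMulVec {R : Type*} [CommRing R] (p q r s : Fin 2 → R) :
    (vecMulVec p q + vecMulVec r s).det =
      (![-p 1, p 0] ⬝ᵥ r) * (s ⬝ᵥ ![-q 1, q 0]) := by
  simp only [det_fin_two, Matrix.add_apply, vecMulVec_apply, vec2_dotProduct, cons_val_zero,
    cons_val_one]
  ring

lemma exists_common_null_vector {S : Submodule K (Matrix (Fin 2) (Fin 2) K)}
    (hS : ∀ B ∈ S, B.det = 0) :
    (∃ c ≠ 0, ∀ B ∈ S, c ᵥ* B = 0) ∨ ∃ d ≠ 0, ∀ B ∈ S, B *ᵥ d = 0 := by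
  have exists_factors : ∀ B ∈ S, ∃ r s, B = vecMulVec r s := fun B hB =>
    exists_eq_vecMulVec_of_rank_le_one
      (Nat.le_of_lt_succ (det_eq_zero_iff_rank_lt_card.mp (hS B hB)))
  obtain rfl | hne := eq_or_ne S ⊥
  · exact .inl ⟨1, one_ne_zero, by simp⟩
  obtain ⟨D, hD, hD0⟩ := S.ne_bot_iff.mp hne
  obtain ⟨p, q, rfl⟩ := exists_factors D hD
  have hp : p ≠ 0 := by rintro rfl; exact hD0 (by simp)
  have hq : q ≠ 0 := by rintro rfl; exact hD0 (by simp)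
  have ne_zero_of_perp {t : Fin 2 → K} (ht : t ≠ 0) : ![-t 1, t 0] ≠ 0 := by
    contrapose! ht
    ext i
    fin_cases i
    · simpa using congrFun ht 1
    · simpa using congrFun ht 0
  have hnull : ∀ B ∈ S, ![-p 1, p 0] ᵥ* B = 0 ∨ B *ᵥ ![-q 1, q 0] = 0 := by
    intro B hB
    have hdet := hS _ (S.add_mem hD hB)
    obtain ⟨r, s, rfl⟩ := exists_factors B hB
    rw [det_vecMulVec_add_vecMulVec, mul_eq_zero] at hdet
    rw [vecMul_vecMulVec, vecMulVec_mulVec]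
    exact hdet.imp (fun h => by rw [h, zero_smul]) fun h => by
      rw [h, MulOpposite.op_zero, zero_smul]
  exact (forall_eq_zero_or_forall_eq_zero
    (vecMulBilin K K ![-p 1, p 0]) ((mulVecBilin K K).flip ![-q 1, q 0]) hnull).imp
    (fun h => ⟨_, ne_zero_of_perp hp, h⟩) fun h => ⟨_, ne_zero_of_perp hq, h⟩

end LinearAlgebra

section Equivalence

variable {K : Type*} [Field K] {n p : ℕ} {V W U : Submodule K (Matrix (Fin n) (Fin p) K)}

lemma matEquiv_map {P : Matrix (Fin n) (Fin n) K} {Q : Matrix (Fin p) (Fin p) K}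
    (V : Submodule K (Matrix (Fin n) (Fin p) K)) (hP : IsUnit P) (hQ : IsUnit Q) :
    MatEquiv K V (V.map (mulRightLinearMap (Fin n) K Q ∘ₗ mulLeftLinearMap (Fin p) K P)) :=
  ⟨P, Q, hP, hQ, rfl⟩

namespace MatEquiv

protected lemma trans (hVW : MatEquiv K V W) (hWU : MatEquiv K W U) : MatEquiv K V U := by
  obtain ⟨P, Q, hP, hQ, hW⟩ := hVW
  obtain ⟨P', Q', hP', hQ', hU⟩ := hWU
  refine ⟨P' * P, Q * Q', hP'.mul hP, hQ.mul hQ', ?_⟩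
  rw [hU, hW, Set.image_image]
  simp only [Matrix.mul_assoc]

lemma det_eq_zero {V W : Submodule K (Matrix (Fin n) (Fin n) K)} (h : MatEquiv K V W)
    (hV : ∀ M ∈ V, M.det = 0) : ∀ M ∈ W, M.det = 0 := by
  obtain ⟨P, Q, -, -, hW⟩ := h
  intro N hN
  obtain ⟨M, hM, rfl⟩ := hW.subset hN
  simp [det_mul, hV M hM]

end MatEquiv

/-- The space of transposes of the matrices of `V`, encoded as a preimage so that membership of
`M` unfolds to `Mᵀ ∈ V`. -/
def transposeSpace (V : Submodule K (Matrix (Fin n) (Fin p) K)) :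
    Submodule K (Matrix (Fin p) (Fin n) K) :=
  V.comap (transposeLinearEquiv (Fin p) (Fin n) K K).toLinearMap

lemma MatEquiv.transpose (h : MatEquiv K V W) :
    MatEquiv K (transposeSpace V) (transposeSpace W) := by
  obtain ⟨P, Q, hP, hQ, hW⟩ := h
  refine ⟨Qᵀ, Pᵀ, (isUnit_transpose _).mpr hQ, (isUnit_transpose _).mpr hP, ?_⟩
  ext N
  constructor
  · intro hN
    obtain ⟨M, hM, hMN⟩ := hW.subset hN
    exact ⟨Mᵀ, hM, transpose_injective <| by simpa [Matrix.mul_assoc] using hMN⟩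
  · rintro ⟨M, hM, rfl⟩
    exact hW.superset ⟨Mᵀ, hM, by simp [Matrix.mul_assoc]⟩

end Equivalence

section Primitive

variable {K : Type*} [Field K] {n p k : ℕ}

/-- Every hyperplane of `K^p` is mapped injectively by some matrix of `V`. This is what the
column-deletion condition in primitivity says about matrices with `urk V + 1` columns. -/
def InjectiveOnHyperplanes (V : Submodule K (Matrix (Fin n) (Fin p) K)) : Prop :=
  ∀ v ≠ 0, ∃ M ∈ V, ∀ z, v ⬝ᵥ z = 0 → M *ᵥ z = 0 → z = 0

lemma injectiveOnHyperplanes_of_not_exists_rank_dropCol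
    {V : Submodule K (Matrix (Fin n) (Fin (k + 1)) K)}
    (hV : ¬ ∃ T, MatEquiv K V T ∧ ∀ M ∈ T, (dropCol M).rank ≤ k - 1) :
    InjectiveOnHyperplanes V := by
  intro v hv
  by_contra! hker
  obtain ⟨Q, hQ, hvQ⟩ := exists_isUnit_vecMul_eq hv
    (v' := Pi.single (Fin.last k) 1) (by simp)
  refine hV ⟨_, matEquiv_map V isUnit_one hQ, ?_⟩
  rintro _ ⟨M, hM, rfl⟩
  simp only [LinearMap.comp_apply, mulLeftLinearMap_apply, mulRightLinearMap_apply, Matrix.one_mul]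
  obtain ⟨z, hvz, hMz, hz⟩ := hker M hM
  obtain ⟨y, rfl⟩ := mulVec_surjective_iff_isUnit.mpr hQ z
  have hy_last : y (Fin.last k) = 0 := by
    rwa [dotProduct_mulVec, hvQ, single_one_dotProduct] at hvz
  have hinit : y ∘ Fin.castSucc ≠ 0 := by
    contrapose! hz
    have hy : y = 0 := funext <| Fin.lastCases hy_last (congrFun hz)
    rw [hy, mulVec_zero]
  have hdrop : (M * Q).submatrix id Fin.castSucc *ᵥ (y ∘ Fin.castSucc) = 0 := by
    rw [mulVec_mulVec] at hMz
    ext i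
    simpa [mulVec, dotProduct, Fin.sum_univ_castSucc, hy_last] using congrFun hMz i
  have hrank := rank_lt_card_of_mulVec_eq_zero hinit hdrop
  rw [Fintype.card_fin] at hrank
  exact Nat.le_sub_one_of_lt hrank

lemma SemiPrimitive.injectiveOnHyperplanes {V : Submodule K (Matrix (Fin n) (Fin (k + 1)) K)}
    (hV : SemiPrimitive K V) (hk : urk V = k) : InjectiveOnHyperplanes V :=
  injectiveOnHyperplanes_of_not_exists_rank_dropCol (by simpa only [hk] using hV.2)

lemma Primitive.injectiveOnHyperplanes_transposeSpace
    {V : Submodule K (Matrix (Fin (k + 1)) (Fin p) K)}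
    (hV : Primitive K V) (hk : urk V = k) : InjectiveOnHyperplanes (transposeSpace V) := by
  refine injectiveOnHyperplanes_of_not_exists_rank_dropCol ?_
  rintro ⟨T, hVT, hT⟩
  refine hV.2 ⟨transposeSpace T, hVT.transpose, fun M hM => ?_⟩
  rw [← rank_transpose, hk]
  exact hT Mᵀ hM

lemma det_eq_zero_of_urk_lt {V : Submodule K (Matrix (Fin n) (Fin n) K)} (hV : urk V < n)
    {M : Matrix (Fin n) (Fin n) K} (hM : M ∈ V) : M.det = 0 := by
  have hbdd : BddAbove (rank '' (V : Set (Matrix (Fin n) (Fin n) K))) :=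
    ⟨Fintype.card (Fin n), Set.forall_mem_image.mpr fun N _ => N.rank_le_card_width⟩
  rw [det_eq_zero_iff_rank_lt_card, Fintype.card_fin]
  exact (le_csSup hbdd (Set.mem_image_of_mem _ hM)).trans_lt hV

end Primitive

section RankOne

variable {K : Type*} [Field K] {n p : ℕ}

/-- Some nonzero linear combination of the rows, the same for all matrices of `V`, always lies
on a fixed line; for an equivalent space this says that one row lives in one column. -/
def HasRowOnLine (V : Submodule K (Matrix (Fin n) (Fin p) K)) : Prop :=
  ∃ w ≠ 0, ∃ v ≠ 0, ∀ M ∈ V, ∃ g : K, w ᵥ* M = g • v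

lemma HasRowOnLine.of_matEquiv {V W : Submodule K (Matrix (Fin n) (Fin p) K)}
    (hVW : MatEquiv K V W) (hW : HasRowOnLine W) : HasRowOnLine V := by
  obtain ⟨P, Q, hP, hQ, hWV⟩ := hVW
  obtain ⟨w, hw, v, hv, hline⟩ := hW
  obtain ⟨v, rfl⟩ := vecMul_surjective_iff_isUnit.mpr hQ v
  refine ⟨w ᵥ* P, ?_, v, ?_, fun M hM => ?_⟩
  · exact (vecMul_injective_of_isUnit hP).ne_iff' (zero_vecMul P) |>.mpr hw
  · rintro rfl
    exact hv (zero_vecMul Q)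
  · obtain ⟨g, hg⟩ := hline _ (hWV.superset ⟨M, hM, rfl⟩)
    refine ⟨g, vecMul_injective_of_isUnit hQ ?_⟩
    simpa only [vecMul_vecMul, smul_vecMul, Matrix.mul_assoc] using hg

lemma hasRowOnLine_of_vecMul_submatrix_succ_eq_zero
    {V : Submodule K (Matrix (Fin (n + 1)) (Fin (p + 1)) K)} {c : Fin n → K} (hc : c ≠ 0)
    (hV : ∀ M ∈ V, c ᵥ* M.submatrix Fin.succ Fin.succ = 0) : HasRowOnLine V := by
  refine ⟨vecCons 0 c, fun h => hc (cons_eq_zero_iff.mp h).2, Pi.single 0 1, by simp,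
    fun M hM => ?_⟩
  refine ⟨(vecCons 0 c ᵥ* M) 0, funext fun j => ?_⟩
  cases j using Fin.cases with
  | zero => simp
  | succ j =>
    simpa [vecMul, dotProduct, Fin.sum_univ_succ] using congrFun (hV M hM) j

lemma exists_matEquiv_single_mem {V : Submodule K (Matrix (Fin (n + 1)) (Fin (p + 1)) K)}
    {E : Matrix (Fin (n + 1)) (Fin (p + 1)) K} (hE : E ∈ V) (hE_rank : E.rank = 1) :
    ∃ W, MatEquiv K V W ∧ single 0 0 1 ∈ W := by
  obtain ⟨u, v, rfl⟩ := exists_eq_vecMulVec_of_rank_le_one hE_rank.le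
  have hu : u ≠ 0 := by rintro rfl; simp at hE_rank
  have hv : v ≠ 0 := by
    rintro rfl
    have hzero : vecMulVec u (0 : Fin (p + 1) → K) = 0 := ext fun _ _ => mul_zero _
    simp [hzero] at hE_rank
  obtain ⟨P, hP, hPu⟩ := exists_isUnit_mulVec_eq hu (u' := Pi.single 0 1) (by simp)
  obtain ⟨Q, hQ, hvQ⟩ := exists_isUnit_vecMul_eq hv (v' := Pi.single 0 1) (by simp)
  refine ⟨_, matEquiv_map V hP hQ, _, hE, ?_⟩
  simp [mul_vecMulVec, vecMulVec_mul, hPu, hvQ, single_eq_single_vecMulVec_single]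

lemma hasRowOnLine_or_of_single_mem {V : Submodule K (Matrix (Fin 3) (Fin 3) K)}
    (hV : ∀ M ∈ V, M.det = 0) (hE : single 0 0 1 ∈ V) :
    HasRowOnLine V ∨ HasRowOnLine (transposeSpace V) := by
  let block : Matrix (Fin 3) (Fin 3) K →ₗ[K] Matrix (Fin 2) (Fin 2) K :=
    { toFun M := M.submatrix Fin.succ Fin.succ
      map_add' _ _ := rfl
      map_smul' _ _ := rfl }
  have hblock : ∀ B ∈ V.map block, B.det = 0 := by
    rintro _ ⟨M, hM, rfl⟩
    have hdet := hV _ (V.add_mem hM hE)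
    rwa [det_add_single_zero_zero, hV M hM, zero_add] at hdet
  obtain ⟨c, hc, hnull⟩ | ⟨d, hd, hnull⟩ := exists_common_null_vector hblock
  · exact .inl <| hasRowOnLine_of_vecMul_submatrix_succ_eq_zero hc fun M hM =>
      hnull _ ⟨M, hM, rfl⟩
  · refine .inr <| hasRowOnLine_of_vecMul_submatrix_succ_eq_zero hd fun M hM => ?_
    rw [← mulVec_transpose]
    exact hnull _ ⟨Mᵀ, hM, rfl⟩

lemma hasRowOnLine_or_of_rank_eq_one {V : Submodule K (Matrix (Fin 3) (Fin 3) K)}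
    (hV : ∀ M ∈ V, M.det = 0) {E : Matrix (Fin 3) (Fin 3) K} (hE : E ∈ V)
    (hE_rank : E.rank = 1) : HasRowOnLine V ∨ HasRowOnLine (transposeSpace V) := by
  obtain ⟨W, hVW, hW⟩ := exists_matEquiv_single_mem hE hE_rank
  exact (hasRowOnLine_or_of_single_mem (hVW.det_eq_zero hV) hW).imp
    (.of_matEquiv hVW) (.of_matEquiv hVW.transpose)

end RankOne

section NormalForm

variable {K : Type*} [Field K] {n : ℕ}

lemma exists_mulVec_eq_zero_of_vecMul_eq_smul {ι : Type*} [Fintype ι] [DecidableEq ι]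
    {M : Matrix ι ι K} (hM : M.det = 0) {w v : ι → K} {g : K} (hg : g ≠ 0)
    (hwM : w ᵥ* M = g • v) : ∃ z ≠ 0, v ⬝ᵥ z = 0 ∧ M *ᵥ z = 0 := by
  obtain ⟨z, hz, hMz⟩ := exists_mulVec_eq_zero_iff.mpr hM
  have hgz : g * (v ⬝ᵥ z) = 0 := by
    rw [← smul_eq_mul, ← smul_dotProduct, ← hwM, ← dotProduct_mulVec, hMz, dotProduct_zero]
  exact ⟨z, hz, (mul_eq_zero.mp hgz).resolve_left hg, hMz⟩

lemma exists_mem_vecMul_eq {V : Submodule K (Matrix (Fin (n + 2)) (Fin (n + 2)) K)}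
    (hV : InjectiveOnHyperplanes (transposeSpace V)) {w v : Fin (n + 2) → K} (hw : w ≠ 0)
    (hline : ∀ M ∈ V, ∃ g : K, w ᵥ* M = g • v) : ∃ M ∈ V, w ᵥ* M = v := by
  obtain ⟨u, hu, huw⟩ := exists_ne_zero_dotProduct_eq_zero w
  obtain ⟨N, hN, hinj⟩ := hV u hu
  obtain ⟨g, hg⟩ := hline Nᵀ hN
  have hg0 : g ≠ 0 := by
    rintro rfl
    rw [zero_smul, vecMul_transpose] at hg
    exact hw (hinj w huw hg)
  exact ⟨g⁻¹ • Nᵀ, V.smul_mem _ hN, by rw [vecMul_smul, hg, inv_smul_smul₀ hg0]⟩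

lemma exists_mem_exists_linearIndependent_pair {V : Submodule K (Matrix (Fin (n + 2)) (Fin (n + 2)) K)}
    (hdet : ∀ M ∈ V, M.det = 0) (hV : InjectiveOnHyperplanes V)
    (hV' : InjectiveOnHyperplanes (transposeSpace V)) {w v : Fin (n + 2) → K} (hw : w ≠ 0)
    (hv : v ≠ 0) (hline : ∀ M ∈ V, ∃ g : K, w ᵥ* M = g • v) :
    ∃ M₁ ∈ V, ∃ M₂ ∈ V, ∃ x y, w ᵥ* M₁ = 0 ∧ w ᵥ* M₂ = v ∧ v ⬝ᵥ x = 0 ∧ v ⬝ᵥ y = 0 ∧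
      M₂ *ᵥ x = M₁ *ᵥ x ∧ M₂ *ᵥ y = 0 ∧
      LinearIndependent K ![x, y] ∧ LinearIndependent K ![M₁ *ᵥ x, M₁ *ᵥ y] := by
  -- `M₁` is injective on the hyperplane orthogonal to `v`, in which `y` and `x` are null vectors of
  -- the singular matrices `M₂` and `M₂ - M₁`.
  obtain ⟨M₁, hM₁, hinj⟩ := hV v hv
  have hwM₁ : w ᵥ* M₁ = 0 := by
    obtain ⟨g, hg⟩ := hline M₁ hM₁
    by_contra! hne
    have hg0 : g ≠ 0 := by
      rintro rfl
      exact hne (by rw [hg, zero_smul])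
    obtain ⟨z, hz, hvz, hM₁z⟩ := exists_mulVec_eq_zero_of_vecMul_eq_smul (hdet M₁ hM₁) hg0 hg
    exact hz (hinj z hvz hM₁z)
  obtain ⟨M₂, hM₂, hwM₂⟩ := exists_mem_vecMul_eq hV' hw hline
  obtain ⟨y, hy, hvy, hM₂y⟩ := exists_mulVec_eq_zero_of_vecMul_eq_smul (v := v) (hdet M₂ hM₂)
    one_ne_zero (by rw [hwM₂, one_smul])
  obtain ⟨x, hx, hvx, hsub⟩ := exists_mulVec_eq_zero_of_vecMul_eq_smul (v := v)
    (hdet _ (V.sub_mem hM₂ hM₁)) one_ne_zero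
    (by rw [vecMul_sub, hwM₂, hwM₁, sub_zero, one_smul])
  have hM₂x : M₂ *ᵥ x = M₁ *ᵥ x := sub_eq_zero.mp (by rw [← sub_mulVec, hsub])
  have hxy : LinearIndependent K ![x, y] := by
    rw [LinearIndependent.pair_symm_iff, LinearIndependent.pair_iff' hy]
    rintro a rfl
    rw [mulVec_smul, hM₂y, smul_zero] at hM₂x
    exact hx (hinj _ hvx hM₂x.symm)
  refine ⟨M₁, hM₁, M₂, hM₂, x, y, hwM₁, hwM₂, hvx, hvy, hM₂x, hM₂y, hxy, ?_⟩
  rw [LinearIndependent.pair_iff] at hxy ⊢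
  intro a b hab
  refine hxy a b (hinj _ ?_ ?_)
  · simp [hvx, hvy]
  · simpa [mulVec_add, mulVec_smul] using hab

lemma eq_of_col_eq_single_of_row_eq_single {A : Matrix (Fin 3) (Fin 3) K} {b g : K}
    (hcol₀ : A.col 0 = Pi.single 0 1) (hcol₁ : A.col 1 = Pi.single 1 b)
    (hrow₂ : A.row 2 = Pi.single 2 g) : A = !![1, 0, A 0 2; 0, b, A 1 2; 0, 0, g] := by
  simp only [funext_iff, Fin.forall_fin_succ, col_apply, row_apply] at hcol₀ hcol₁ hrow₂
  rw [← ext_iff]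
  simp_all [Fin.forall_fin_succ]

lemma exists_matEquiv_normalForm {V : Submodule K (Matrix (Fin 3) (Fin 3) K)}
    (hdet : ∀ M ∈ V, M.det = 0) (hV : InjectiveOnHyperplanes V)
    (hV' : InjectiveOnHyperplanes (transposeSpace V)) (hrow : HasRowOnLine V) :
    ∃ T, MatEquiv K V T ∧ (∀ M ∈ T, M 2 0 = 0 ∧ M 2 1 = 0) ∧
      (∃ a b, !![1, 0, a; 0, 1, b; 0, 0, 0] ∈ T) ∧ ∃ a b, !![1, 0, a; 0, 0, b; 0, 0, 1] ∈ T := by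
  obtain ⟨w, hw, v, hv, hline⟩ := hrow
  obtain ⟨M₁, hM₁, M₂, hM₂, x, y, hwM₁, hwM₂, hvx, hvy, hM₂x, hM₂y, hxy, hM₁xy⟩ :=
    exists_mem_exists_linearIndependent_pair hdet hV hV' hw hv hline
  obtain ⟨Q, hQ, hQ_col, hvQ⟩ := exists_isUnit_mulVec_single_castSucc_eq hv hxy
    (Fin.forall_fin_two.mpr ⟨hvx, hvy⟩)
  have hwM₁x (z : Fin 3 → K) : w ⬝ᵥ M₁ *ᵥ z = 0 := by
    rw [dotProduct_mulVec, hwM₁, zero_dotProduct]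
  obtain ⟨P, hP, hP_col, hwP⟩ := exists_isUnit_mulVec_eq_single_castSucc hw hM₁xy
    (Fin.forall_fin_two.mpr ⟨hwM₁x x, hwM₁x y⟩)
  have hcol (M : Matrix (Fin 3) (Fin 3) K) (i : Fin 2) :
      (P * M * Q).col i.castSucc = P *ᵥ M *ᵥ ![x, y] i := by
    rw [← mulVec_single_one, ← mulVec_mulVec, ← mulVec_mulVec, hQ_col]
  have hrow₂ {M : Matrix (Fin 3) (Fin 3) K} {g : K} (hM : w ᵥ* M = g • v) :
      (P * M * Q).row (Fin.last 2) = Pi.single (Fin.last 2) g := by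
    rw [← single_one_vecMul, ← vecMul_vecMul, ← vecMul_vecMul, hwP, hM, smul_vecMul, hvQ,
      ← Pi.single_smul, smul_eq_mul, mul_one]
  refine ⟨_, matEquiv_map V hP hQ, ?_, ⟨(P * M₁ * Q) 0 2, (P * M₁ * Q) 1 2, M₁, hM₁, ?_⟩,
    ⟨(P * M₂ * Q) 0 2, (P * M₂ * Q) 1 2, M₂, hM₂, ?_⟩⟩
  · rintro _ ⟨M, hM, rfl⟩
    obtain ⟨g, hg⟩ := hline M hM
    exact ⟨congrFun (hrow₂ hg) 0, congrFun (hrow₂ hg) 1⟩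
  · refine eq_of_col_eq_single_of_row_eq_single ((hcol M₁ 0).trans (hP_col 0))
      ((hcol M₁ 1).trans (hP_col 1)) (hrow₂ ?_)
    rw [hwM₁, zero_smul]
  · refine eq_of_col_eq_single_of_row_eq_single ((hcol M₂ 0).trans ?_)
      ((hcol M₂ 1).trans ?_) (hrow₂ ?_)
    · exact (congrArg (P *ᵥ ·) hM₂x).trans (hP_col 0)
    · exact (congrArg (P *ᵥ ·) hM₂y).trans (by simp)
    · rw [hwM₂, one_smul]

end NormalForm

section J3

lemma mem_J3_iff {M : Matrix (Fin 3) (Fin 3) (ZMod 2)} :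
    M ∈ J3 ↔ M.trace = 0 ∧ M 1 0 = 0 ∧ M 2 0 = 0 ∧ M 2 1 = 0 := by
  change (M.trace = 0 ∧ ∀ i j : Fin 3, j < i → M i j = 0) ↔ _
  simp [Fin.forall_fin_succ]

/-- `V` is equivalent to a subspace of `J3`. -/
def EquivSubspaceJ3 (V : Submodule (ZMod 2) (Matrix (Fin 3) (Fin 3) (ZMod 2))) : Prop :=
  ∃ W ≤ J3, MatEquiv (ZMod 2) V W

variable {V T : Submodule (ZMod 2) (Matrix (Fin 3) (Fin 3) (ZMod 2))}

lemma EquivSubspaceJ3.of_matEquiv (hVT : MatEquiv (ZMod 2) V T) (hT : EquivSubspaceJ3 T) :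
    EquivSubspaceJ3 V :=
  let ⟨W, hW, hTW⟩ := hT
  ⟨W, hW, hVT.trans hTW⟩

lemma equivSubspaceJ3_of_reindex_mem (σ τ : Equiv.Perm (Fin 3))
    (hV : ∀ M ∈ V, M.submatrix σ τ ∈ J3) : EquivSubspaceJ3 V := by
  refine ⟨_, ?_, matEquiv_map V (P := submatrix 1 σ (Equiv.refl _))
    (Q := submatrix 1 (Equiv.refl _) τ) ?_ ?_⟩
  · rintro _ ⟨M, hM, rfl⟩
    simp only [LinearMap.comp_apply, mulLeftLinearMap_apply, mulRightLinearMap_apply,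
      one_submatrix_mul, mul_submatrix_one]
    exact hV M hM
  · exact (isUnit_submatrix_equiv σ _).mpr isUnit_one
  · exact (isUnit_submatrix_equiv _ τ).mpr isUnit_one

lemma EquivSubspaceJ3.of_transposeSpace (hV : EquivSubspaceJ3 (transposeSpace V)) :
    EquivSubspaceJ3 V := by
  obtain ⟨W, hW, hVW⟩ := hV
  refine .of_matEquiv hVW.transpose (equivSubspaceJ3_of_reindex_mem Fin.revPerm Fin.revPerm ?_)
  intro M hM
  obtain ⟨htrace, h10, h20, h21⟩ := mem_J3_iff.mp (hW hM)
  rw [mem_J3_iff, trace_submatrix_self]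
  exact ⟨M.trace_transpose ▸ htrace, h21, h20, h10⟩

lemma trace_eq_zero_and_mul_eq_zero (hdet : ∀ M ∈ T, M.det = 0)
    (hrow : ∀ M ∈ T, M 2 0 = 0 ∧ M 2 1 = 0) {a b c d : ZMod 2}
    (hM₁ : !![1, 0, a; 0, 1, b; 0, 0, 0] ∈ T) (hM₂ : !![1, 0, c; 0, 0, d; 0, 0, 1] ∈ T) :
    ∀ M ∈ T, M.trace = 0 ∧ M 1 0 * M 0 1 = 0 := by
  have of_apply_eq_one : ∀ N ∈ T, N 2 2 = 1 → N.trace = 0 ∧ N 1 0 * N 0 1 = 0 := by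
    intro N hN hN22
    obtain ⟨hN20, hN21⟩ := hrow N hN
    have hblock : N 0 0 * N 1 1 - N 0 1 * N 1 0 = 0 := by
      simpa [det_fin_three, hN20, hN21, hN22] using hdet N hN
    -- Subtracting the first given matrix shifts the upper left block by the identity.
    have hblock_sub : (N 0 0 - 1) * (N 1 1 - 1) - N 0 1 * N 1 0 = 0 := by
      simpa [det_fin_three, hN20, hN21, hN22] using hdet _ (T.sub_mem hN hM₁)
    have hblock_trace : N 0 0 + N 1 1 = 1 := by linear_combination hblock - hblock_sub
    constructor
    · rw [trace_fin_three, hblock_trace, hN22, CharTwo.add_self_eq_zero]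
    · linear_combination N 0 0 * hblock_trace - hblock - ZMod.pow_card (N 0 0)
  intro M hM
  obtain hM22 | hM22 : M 2 2 = 1 ∨ M 2 2 = 0 := by
    generalize M 2 2 = t
    revert t
    decide
  · exact of_apply_eq_one M hM hM22
  · simpa [trace_add, trace_fin_three, CharTwo.add_self_eq_zero, ← add_assoc] using
      of_apply_eq_one _ (T.add_mem hM hM₂) (by simp [hM22])

lemma equivSubspaceJ3_of_normalForm (hdet : ∀ M ∈ T, M.det = 0)
    (hrow : ∀ M ∈ T, M 2 0 = 0 ∧ M 2 1 = 0) {a b c d : ZMod 2}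
    (hM₁ : !![1, 0, a; 0, 1, b; 0, 0, 0] ∈ T) (hM₂ : !![1, 0, c; 0, 0, d; 0, 0, 1] ∈ T) :
    EquivSubspaceJ3 T := by
  have key := trace_eq_zero_and_mul_eq_zero hdet hrow hM₁ hM₂
  obtain hlower | hupper := forall_eq_zero_or_forall_eq_zero
    (entryLinearMap (ZMod 2) (ZMod 2) (1 : Fin 3) (0 : Fin 3)) (entryLinearMap (ZMod 2) _ 0 1)
    fun M hM => mul_eq_zero.mp (key M hM).2
  · exact equivSubspaceJ3_of_reindex_mem 1 1 fun M hM =>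
      mem_J3_iff.mpr ⟨(key M hM).1, hlower M hM, hrow M hM⟩
  · refine equivSubspaceJ3_of_reindex_mem (Equiv.swap 0 1) (Equiv.swap 0 1) fun M hM => ?_
    obtain ⟨hM20, hM21⟩ := hrow M hM
    rw [mem_J3_iff, trace_submatrix_self]
    exact ⟨(key M hM).1, hupper M hM, hM21, hM20⟩

lemma equivSubspaceJ3_of_hasRowOnLine (hdet : ∀ M ∈ V, M.det = 0) (hV : InjectiveOnHyperplanes V)
    (hV' : InjectiveOnHyperplanes (transposeSpace V)) (hrow : HasRowOnLine V) :
    EquivSubspaceJ3 V := by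
  obtain ⟨T, hVT, hT_row, ⟨_, _, hM₁⟩, _, _, hM₂⟩ :=
    exists_matEquiv_normalForm hdet hV hV' hrow
  exact .of_matEquiv hVT (equivSubspaceJ3_of_normalForm (hVT.det_eq_zero hdet) hT_row hM₁ hM₂)

end J3

theorem primitive_with_rank_one_matrix_equiv_subspace_of_J3
    (V : Submodule (ZMod 2) (Matrix (Fin 3) (Fin 3) (ZMod 2)))
    (hprim : Primitive (ZMod 2) V) (hurk : urk V = 2)
    (hrank1 : ∃ M ∈ V, M.rank = 1) :
    ∃ W : Submodule (ZMod 2) (Matrix (Fin 3) (Fin 3) (ZMod 2)),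
      W ≤ J3 ∧ MatEquiv (ZMod 2) V W := by
  obtain ⟨E, hE, hE_rank⟩ := hrank1
  have hdet : ∀ M ∈ V, M.det = 0 := fun M hM => det_eq_zero_of_urk_lt (by omega) hM
  have hcol : InjectiveOnHyperplanes V := hprim.1.injectiveOnHyperplanes hurk
  have hrow : InjectiveOnHyperplanes (transposeSpace V) :=
    hprim.injectiveOnHyperplanes_transposeSpace hurk
  obtain hline | hline := hasRowOnLine_or_of_rank_eq_one hdet hE hE_rank
  · exact equivSubspaceJ3_of_hasRowOnLine hdet hcol hrow hline
  · have hdet_transpose : ∀ M ∈ transposeSpace V, M.det = 0 := fun M hM =>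
      M.det_transpose ▸ hdet Mᵀ hM
    exact EquivSubspaceJ3.of_transposeSpace
      (equivSubspaceJ3_of_hasRowOnLine hdet_transpose hrow hcol hline)
end
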